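/- Every unsatisfiable linear k-CNF formula has more than 4^k/(4·e²·k³) clauses; equivalently, every linear k-CNF formula with at most 4^k/(4·e²·k³) clauses is satisfiable. -/

import Mathlib

/-- The set `A` of true variables satisfies the clause `C`. -/
def SatBy {V : Type*} (A : Finset V) (C : Finset (V × Bool)) : Prop :=
  ∃ p ∈ C, (p.1 ∈ A ↔ p.2 = true)

open Classical in
/-- The number of assignments satisfying all clauses indexed by `S`. -/
noncomputable def numSat {ι V : Type*} (U : Finset V) (c : ι → Finset (V × Bool))
    (S : Finset ι) : ℕ :=
  (U.powerset.filter (fun A => ∀ j ∈ S, SatBy A (c j))).card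

open Classical in
/-- Independence. -/
lemma bad_count {ι V : Type*} (U : Finset V) (c : ι → Finset (V × Bool)) (r : ℕ)
    (T : Finset ι) (i : ι) (hU : (c i).image Prod.fst ⊆ U)
    (hr : ((c i).image Prod.fst).card = r)
    (hT : ∀ j ∈ T, Disjoint ((c i).image Prod.fst) ((c j).image Prod.fst)) :
    (U.powerset.filter (fun A => (∀ j ∈ T, SatBy A (c j)) ∧ ¬ SatBy A (c i))).card * 2 ^ r
      ≤ numSat U c T := by
  rw [← hr, ← Finset.card_powerset, ← Finset.card_product]
  unfold numSat
  apply Finset.card_le_card_of_injOn (fun q => symmDiff q.1 q.2)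
  · rintro ⟨A, s⟩ h
    simp only [Finset.coe_product, Set.mem_prod, Finset.mem_coe, Finset.mem_filter,
      Finset.mem_powerset] at h ⊢
    obtain ⟨⟨hA, hs, -⟩, hsub⟩ := h
    refine ⟨?_, ?_⟩
    · intro v hv
      rw [Finset.mem_symmDiff] at hv
      rcases hv with hv | hv
      · exact hA hv.1
      · exact hU (hsub hv.1)
    · intro j hj
      obtain ⟨p, hp, hp2⟩ := hs j hj
      refine ⟨p, hp, ?_⟩
      have : p.1 ∉ s := fun hps =>
        Finset.disjoint_left.1 (hT j hj) (hsub hps) (Finset.mem_image_of_mem _ hp)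
      rw [Finset.mem_symmDiff]
      tauto
  · rintro ⟨A, s⟩ h ⟨B, t⟩ h' heq
    simp only [Finset.coe_product, Set.mem_prod, Finset.mem_coe, Finset.mem_filter,
      Finset.mem_powerset] at h h' heq
    obtain ⟨⟨-, -, hA⟩, hs⟩ := h
    obtain ⟨⟨-, -, hB⟩, ht⟩ := h'
    have key : ∀ v, (v ∈ A ↔ v ∈ B) ∧ (v ∈ s ↔ v ∈ t) := by
      intro v
      have h1 : v ∈ symmDiff A s ↔ v ∈ symmDiff B t := by rw [heq]
      rw [Finset.mem_symmDiff, Finset.mem_symmDiff] at h1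
      by_cases hv : v ∈ (c i).image Prod.fst
      · obtain ⟨p, hp, rfl⟩ := Finset.mem_image.1 hv
        have h2 : ¬ (p.1 ∈ A ↔ p.2 = true) := fun h => hA ⟨p, hp, h⟩
        have h3 : ¬ (p.1 ∈ B ↔ p.2 = true) := fun h => hB ⟨p, hp, h⟩
        tauto
      · have h2 : v ∉ s := fun h => hv (hs h)
        have h3 : v ∉ t := fun h => hv (ht h)
        tauto
    refine Prod.ext ?_ ?_
    · ext v; exact (key v).1
    · ext v; exact (key v).2

open Classical in
lemma lll_step {ι V : Type*} (U : Finset V) (F : Finset ι) (c : ι → Finset (V × Bool))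
    (r D : ℕ) (x : ℝ) (hx0 : 0 ≤ x) (hx1 : x < 1)
    (hU : ∀ i ∈ F, (c i).image Prod.fst ⊆ U)
    (hr : ∀ i ∈ F, ((c i).image Prod.fst).card = r)
    (hD : ∀ i ∈ F, (F.filter (fun j => j ≠ i ∧
      ¬ Disjoint ((c i).image Prod.fst) ((c j).image Prod.fst))).card ≤ D)
    (hx : 1 ≤ x * (1 - x) ^ D * 2 ^ r) (S : Finset ι) :
    S ⊆ F → ∀ i ∈ F, i ∉ S → (1 - x) * numSat U c S ≤ numSat U c (insert i S) := by
  induction S using Finset.strongInduction with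
  | H S ih =>
  intro hS i hi hiS
  set T := S.filter (fun j => Disjoint ((c i).image Prod.fst) ((c j).image Prod.fst)) with hTdef
  set R := S.filter (fun j => ¬ Disjoint ((c i).image Prod.fst) ((c j).image Prod.fst)) with hRdef
  have hTR : T ∪ R = S := Finset.filter_union_filter_not_eq _ _
  have hRD : R.card ≤ D := by
    refine le_trans (Finset.card_le_card ?_) (hD i hi)
    intro j hj
    rw [hRdef, Finset.mem_filter] at hj
    rw [Finset.mem_filter]
    exact ⟨hS hj.1, fun h => hiS (h ▸ hj.1), hj.2⟩
  have h1x : 0 ≤ 1 - x := by linarith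
  have hchain : ∀ Q : Finset ι, Q ⊆ R →
      (1 - x) ^ Q.card * (numSat U c T : ℝ) ≤ numSat U c (T ∪ Q) := by
    intro Q
    induction Q using Finset.induction_on with
    | empty => simp
    | insert j Q hjQ ihQ =>
      intro hQ
      have hjR : j ∈ R := hQ (Finset.mem_insert_self _ _)
      have hQR : Q ⊆ R := fun a ha => hQ (Finset.mem_insert_of_mem ha)
      have hjS : j ∈ S := (Finset.mem_filter.1 hjR).1
      have hjT : j ∉ T := fun h => (Finset.mem_filter.1 hjR).2 (Finset.mem_filter.1 h).2
      have hj : j ∉ T ∪ Q := by simp [hjT, hjQ]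
      have hsub : T ∪ Q ⊆ S := by
        rw [← hTR]; exact Finset.union_subset_union_right hQR
      have hss : T ∪ Q ⊂ S := ⟨hsub, fun h => hj (h hjS)⟩
      have h3 := ih _ hss (hsub.trans hS) j (hS hjS) hj
      rw [Finset.card_insert_of_notMem hjQ, Finset.union_insert, pow_succ]
      have h4 := mul_le_mul_of_nonneg_left (ihQ hQR) h1x
      linarith
  have hTS : (1 - x) ^ D * (numSat U c T : ℝ) ≤ numSat U c S := by
    have h := hchain R (Finset.Subset.refl _)
    rw [hTR] at h
    refine le_trans (mul_le_mul_of_nonneg_right ?_ (by positivity)) h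
    exact pow_le_pow_of_le_one h1x (by linarith) hRD
  have hb := bad_count U c r T i (hU i hi) (hr i hi) (fun j hj => (Finset.mem_filter.1 hj).2)
  set b := (U.powerset.filter
    (fun A => (∀ j ∈ S, SatBy A (c j)) ∧ ¬ SatBy A (c i))).card with hbdef
  have hbT : b * 2 ^ r ≤ numSat U c T := by
    refine le_trans (Nat.mul_le_mul_right _ (Finset.card_le_card ?_)) hb
    intro A hA
    rw [Finset.mem_filter] at hA ⊢
    exact ⟨hA.1, fun j hj => hA.2.1 j (Finset.mem_filter.1 hj).1, hA.2.2⟩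
  have hsplit : numSat U c S ≤ numSat U c (insert i S) + b := by
    unfold numSat
    rw [hbdef]
    refine le_trans (Finset.card_le_card ?_) (Finset.card_union_le _ _)
    intro A hA
    rw [Finset.mem_filter] at hA
    rw [Finset.mem_union, Finset.mem_filter, Finset.mem_filter]
    by_cases h : SatBy A (c i)
    · left
      refine ⟨hA.1, ?_⟩
      intro j hj
      rcases Finset.mem_insert.1 hj with rfl | hj
      · exact h
      · exact hA.2 j hj
    · right
      exact ⟨hA.1, hA.2, h⟩
  have hbT' : (b : ℝ) * 2 ^ r ≤ numSat U c T := by exact_mod_cast hbT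
  have hsplit' : (numSat U c S : ℝ) ≤ numSat U c (insert i S) + b := by exact_mod_cast hsplit
  have hbx : (b : ℝ) ≤ x * numSat U c S := by
    have hb0 : (0 : ℝ) ≤ b := Nat.cast_nonneg _
    calc (b : ℝ) = b * 1 := by ring
      _ ≤ b * (x * (1 - x) ^ D * 2 ^ r) := mul_le_mul_of_nonneg_left hx hb0
      _ = x * (1 - x) ^ D * (b * 2 ^ r) := by ring
      _ ≤ x * (1 - x) ^ D * numSat U c T :=
        mul_le_mul_of_nonneg_left hbT' (mul_nonneg hx0 (pow_nonneg h1x _))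
      _ = x * ((1 - x) ^ D * numSat U c T) := by ring
      _ ≤ x * numSat U c S := mul_le_mul_of_nonneg_left hTS hx0
  linarith

open Classical in
lemma lll {ι V : Type*} (U : Finset V) (F : Finset ι) (c : ι → Finset (V × Bool))
    (r D : ℕ) (x : ℝ) (hx0 : 0 ≤ x) (hx1 : x < 1)
    (hU : ∀ i ∈ F, (c i).image Prod.fst ⊆ U)
    (hr : ∀ i ∈ F, ((c i).image Prod.fst).card = r)
    (hD : ∀ i ∈ F, (F.filter (fun j => j ≠ i ∧
      ¬ Disjoint ((c i).image Prod.fst) ((c j).image Prod.fst))).card ≤ D)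
    (hx : 1 ≤ x * (1 - x) ^ D * 2 ^ r) :
    ∃ A : Finset V, ∀ i ∈ F, SatBy A (c i) := by
  have hpos : ∀ S : Finset ι, S ⊆ F → (0 : ℝ) < numSat U c S := by
    intro S
    induction S using Finset.induction_on with
    | empty => intro _; simp [numSat]
    | insert j S hjS ih =>
      intro h
      have h1 : S ⊆ F := fun a ha => h (Finset.mem_insert_of_mem ha)
      have h2 := lll_step U F c r D x hx0 hx1 hU hr hD hx S h1 j
        (h (Finset.mem_insert_self _ _)) hjS
      exact lt_of_lt_of_le (mul_pos (by linarith) (ih h1)) h2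
  have h := hpos F (Finset.Subset.refl _)
  have h' : 0 < numSat U c F := by exact_mod_cast h
  obtain ⟨A, hA⟩ := Finset.card_pos.1 h'
  exact ⟨A, (Finset.mem_filter.1 hA).2⟩

/-- Numerical condition for the local lemma. -/
lemma lll_num (D r : ℕ) (hD : 1 ≤ D) (h : Real.exp 1 * ((D : ℝ) + 1) ≤ 2 ^ r) :
    1 ≤ (1 / ((D : ℝ) + 1)) * (1 - 1 / ((D : ℝ) + 1)) ^ D * 2 ^ r := by
  have hD0 : (0 : ℝ) < D := by exact_mod_cast hD
  have h1 : (1 + 1 / (D : ℝ)) ^ D ≤ Real.exp 1 := by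
    calc (1 + 1 / (D : ℝ)) ^ D ≤ (Real.exp (1 / (D : ℝ))) ^ D := by
          apply pow_le_pow_left₀ (by positivity)
          rw [add_comm]; exact Real.add_one_le_exp _
      _ = Real.exp 1 := by
          rw [← Real.exp_nat_mul]; congr 1; field_simp
  have h2 : (1 - 1 / ((D : ℝ) + 1)) ^ D * (1 + 1 / (D : ℝ)) ^ D = 1 := by
    rw [← mul_pow]
    have : (1 - 1 / ((D : ℝ) + 1)) * (1 + 1 / (D : ℝ)) = 1 := by
      field_simp; ring
    rw [this, one_pow]
  have h3 : 0 ≤ (1 - 1 / ((D : ℝ) + 1)) ^ D := by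
    apply pow_nonneg
    rw [sub_nonneg, div_le_one (by positivity)]
    linarith
  have h4 : 1 ≤ (1 - 1 / ((D : ℝ) + 1)) ^ D * Real.exp 1 := by
    exact h2.symm.le.trans (mul_le_mul_of_nonneg_left h1 h3)
  calc (1 : ℝ) ≤ (1 - 1 / ((D : ℝ) + 1)) ^ D * Real.exp 1 := h4
    _ = (1 / ((D : ℝ) + 1)) * (1 - 1 / ((D : ℝ) + 1)) ^ D * (Real.exp 1 * ((D : ℝ) + 1)) := by
      field_simp
    _ ≤ _ := mul_le_mul_of_nonneg_left h (mul_nonneg (by positivity) h3)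

/-- Every unsatisfiable linear k-CNF formula (k ≥ 2) has more than
4^k/(4·e²·k³) clauses. -/
theorem stmt10 {V : Type*} [DecidableEq V] (k : ℕ) (hk : 2 ≤ k)
    (F : Finset (Finset (V × Bool)))
    (hcard : ∀ C ∈ F, C.card = k ∧ (C.image Prod.fst).card = k)
    (hlin : ∀ C ∈ F, ∀ D ∈ F, C ≠ D → ((C.image Prod.fst) ∩ (D.image Prod.fst)).card ≤ 1)
    (hunsat : ∀ α : V → Bool, ∃ C ∈ F, ∀ p ∈ C, α p.1 ≠ p.2) :
    (4 : ℝ) ^ k / (4 * Real.exp 1 ^ 2 * (k : ℝ) ^ 3) < F.card := by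
  classical
  let deg : V → ℕ := fun v => (F.filter (fun C => v ∈ C.image Prod.fst)).card
  obtain ⟨C₀, hC₀, -⟩ := hunsat (fun _ => true)
  have hV : Nonempty V := by
    have : 0 < C₀.card := by rw [(hcard C₀ hC₀).1]; omega
    obtain ⟨p, _⟩ := Finset.card_pos.1 this
    exact ⟨p.1⟩
  have hy : ∀ C : Finset (V × Bool), ∃ y : V, C ∈ F →
      y ∈ C.image Prod.fst ∧ ∀ v ∈ C.image Prod.fst, deg v ≤ deg y := by
    intro C
    by_cases hC : C ∈ F
    · have : (C.image Prod.fst).Nonempty := by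
        rw [← Finset.card_pos, (hcard C hC).2]; omega
      obtain ⟨y, hy1, hy2⟩ := Finset.exists_max_image _ deg this
      exact ⟨y, fun _ => ⟨hy1, hy2⟩⟩
    · exact ⟨hV.some, fun h => absurd h hC⟩
  choose y hy using hy
  let c : Finset (V × Bool) → Finset (V × Bool) := fun C => C.filter (fun p => p.1 ≠ y C)
  have hc : ∀ C, (c C).image Prod.fst = (C.image Prod.fst).erase (y C) := by
    intro C
    ext v
    simp only [c, Finset.mem_image, Finset.mem_filter, Finset.mem_erase]
    constructor
    · rintro ⟨p, ⟨h1, h2⟩, rfl⟩; exact ⟨h2, p, h1, rfl⟩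
    · rintro ⟨h2, p, h1, rfl⟩; exact ⟨p, ⟨h1, h2⟩, rfl⟩
  have hr : ∀ C ∈ F, ((c C).image Prod.fst).card = k - 1 := by
    intro C hC
    rw [hc, Finset.card_erase_of_mem (hy C hC).1, (hcard C hC).2]
  let deg' : V → ℕ := fun v => (F.filter (fun C => v ∈ (c C).image Prod.fst)).card
  let U : Finset V := F.biUnion (fun C => (c C).image Prod.fst)
  have hU : ∀ C ∈ F, (c C).image Prod.fst ⊆ U := fun C hC =>
    Finset.subset_biUnion_of_mem (fun C => (c C).image Prod.fst) hC
  have hUne : U.Nonempty := by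
    have : ((c C₀).image Prod.fst).Nonempty := by
      rw [← Finset.card_pos, hr C₀ hC₀]; omega
    exact this.mono (hU C₀ hC₀)
  obtain ⟨x, hxU, hxmax⟩ := Finset.exists_max_image U deg' hUne
  set G := F.filter (fun C => x ∈ (c C).image Prod.fst) with hG
  have hd1 : 1 ≤ G.card := by
    obtain ⟨C, hC, hxC⟩ := Finset.mem_biUnion.1 hxU
    exact Finset.card_pos.2 ⟨C, Finset.mem_filter.2 ⟨hC, hxC⟩⟩
  -- injectivity of `y` on `G`
  have hinj : Set.InjOn y (G : Set (Finset (V × Bool))) := by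
    intro C hC E hE heq
    by_contra hne
    have hC' := Finset.mem_filter.1 (Finset.mem_coe.1 hC)
    have hE' := Finset.mem_filter.1 (Finset.mem_coe.1 hE)
    rw [hc, Finset.mem_erase] at hC' hE'
    have h1 := hlin C hC'.1 E hE'.1 hne
    have h2 := Finset.card_le_one.1 h1 x (Finset.mem_inter.2 ⟨hC'.2.2, hE'.2.2⟩) (y C)
      (Finset.mem_inter.2 ⟨(hy C hC'.1).1, heq ▸ (hy E hE'.1).1⟩)
    exact hC'.2.1 h2
  have hdeg : ∀ C ∈ G, G.card ≤ deg (y C) := by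
    intro C hC
    have hC' := Finset.mem_filter.1 hC
    have hxC : x ∈ C.image Prod.fst := by
      have := hC'.2
      rw [hc, Finset.mem_erase] at this
      exact this.2
    refine le_trans (Finset.card_le_card ?_) ((hy C hC'.1).2 x hxC)
    intro E hE
    have hE' := Finset.mem_filter.1 hE
    rw [hc, Finset.mem_erase] at hE'
    exact Finset.mem_filter.2 ⟨hE'.1, hE'.2.2⟩
  have hsq : G.card * G.card ≤ F.card * k := by
    calc G.card * G.card = ∑ C ∈ G, G.card := by simp
      _ ≤ ∑ C ∈ G, deg (y C) := Finset.sum_le_sum hdeg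
      _ = ∑ v ∈ G.image y, deg v := (Finset.sum_image hinj).symm
      _ = ∑ C ∈ F, ((G.image y).filter (fun v => v ∈ C.image Prod.fst)).card :=
        Finset.sum_card_bipartiteAbove_eq_sum_card_bipartiteBelow
          (fun v (C : Finset (V × Bool)) => v ∈ C.image Prod.fst)
      _ ≤ ∑ C ∈ F, k := by
        refine Finset.sum_le_sum fun C hC => ?_
        rw [← (hcard C hC).2]
        refine Finset.card_le_card fun v hv => (Finset.mem_filter.1 hv).2
      _ = F.card * k := by simp
  have hDb : ∀ C ∈ F, (F.filter (fun E => E ≠ C ∧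
      ¬ Disjoint ((c C).image Prod.fst) ((c E).image Prod.fst))).card ≤ (k - 1) * G.card := by
    intro C hC
    rw [← hr C hC]
    refine le_trans (Finset.card_le_card ?_) (Finset.card_biUnion_le_card_mul
      ((c C).image Prod.fst) (fun v => F.filter (fun E => v ∈ (c E).image Prod.fst)) G.card ?_)
    · intro E hE
      obtain ⟨hEF, -, hdis⟩ := Finset.mem_filter.1 hE
      obtain ⟨v, hv1, hv2⟩ := Finset.not_disjoint_iff.1 hdis
      exact Finset.mem_biUnion.2 ⟨v, hv1, Finset.mem_filter.2 ⟨hEF, hv2⟩⟩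
    · intro v hv
      exact hxmax v (hU C hC hv)
  -- the local lemma must fail
  have hbig : (2 : ℝ) ^ (k - 1) < Real.exp 1 * (k * G.card) := by
    by_contra hcon
    push Not at hcon
    have hD1 : 1 ≤ (k - 1) * G.card := Nat.mul_pos (by omega) hd1
    have hle : (k - 1) * G.card + 1 ≤ k * G.card := by
      obtain ⟨m, rfl⟩ : ∃ m, k = m + 1 := ⟨k - 1, by omega⟩
      simp only [Nat.add_sub_cancel]
      nlinarith
    have hle' : ((((k - 1) * G.card : ℕ) : ℝ) + 1) ≤ k * G.card := by exact_mod_cast hle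
    have hnum := lll_num ((k - 1) * G.card) (k - 1) hD1
      (le_trans (mul_le_mul_of_nonneg_left hle' (Real.exp_pos 1).le) hcon)
    have hDpos : (0 : ℝ) < (((k - 1) * G.card : ℕ) : ℝ) := by exact_mod_cast hD1
    obtain ⟨A, hA⟩ := lll U F c (k - 1) ((k - 1) * G.card) _ (by positivity)
      (by rw [div_lt_one (by positivity)]; linarith)
      (fun C hC => by convert hU C hC) (fun C hC => by convert hr C hC)
      (fun C hC => by convert hDb C hC) hnum
    obtain ⟨C, hC, hbad⟩ := hunsat (fun v => decide (v ∈ A))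
    obtain ⟨p, hp, hp2⟩ := hA C hC
    have := hbad p (Finset.mem_filter.1 hp).1
    apply this
    rcases hb : p.2 with _ | _ <;> simp [hb] at hp2 ⊢ <;> exact hp2
  have hsq' : (G.card : ℝ) * G.card ≤ F.card * k := by exact_mod_cast hsq
  have hk0 : (0 : ℝ) < k := by exact_mod_cast (by omega : 0 < k)
  have he := Real.exp_pos 1
  rw [div_lt_iff₀ (by positivity)]
  have h4 : (4 : ℝ) ^ k = 4 * ((2 : ℝ) ^ (k - 1)) ^ 2 := by
    obtain ⟨m, rfl⟩ : ∃ m, k = m + 1 := ⟨k - 1, by omega⟩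
    simp only [Nat.add_sub_cancel]
    rw [pow_succ, ← pow_mul, mul_comm m 2, pow_mul]; norm_num; ring
  have h5 : ((2 : ℝ) ^ (k - 1)) ^ 2 < (Real.exp 1 * (k * G.card)) ^ 2 :=
    pow_lt_pow_left₀ hbig (by positivity) (by norm_num)
  have h6 := mul_le_mul_of_nonneg_left hsq' (by positivity : 0 ≤ Real.exp 1 ^ 2 * (k : ℝ) ^ 2)
  rw [h4]
  nlinarith
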